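/- arXiv:2506.17888 — 6 statements merged into one kernel-verified Lean document; each statement's English description precedes it below -/
import Mathlib

section
/- Let X be a path-connected topological space. If there exists a continuous map s : X × X → P(X) with p ∘ s = id_{X×X} (a continuous global motion planner), then X is contractible. -/
/-- For a topological space `X`, the path space `P(X)` is the space of continuous maps
`[0,1] → X` with the compact-open topology, and `pathFibration` sends a path `γ` to its
pair of endpoints `(γ 0, γ 1)`. -/
noncomputable def pathFibration (X : Type*) [TopologicalSpace X] :
    C(unitInterval, X) → X × X :=
  fun γ => (γ 0, γ 1)

/-!
A lift of `(f₀, f₁) : Y → X × X` through the path fibration is a homotopy from `f₀` to `f₁`, by the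
exponential law. A motion planner lifts every such pair, in particular the pair formed by the
identity and a constant map.
-/

section

variable {X Y : Type*} [TopologicalSpace X] [TopologicalSpace Y] {f₀ f₁ : C(Y, X)}

theorem homotopic_of_pathFibration_lift (γ : C(Y, C(unitInterval, X)))
    (hγ : ∀ y, pathFibration X (γ y) = (f₀ y, f₁ y)) : f₀.Homotopic f₁ :=
  ⟨{ toContinuousMap := γ.uncurry.comp .prodSwap
     map_zero_left y := congrArg Prod.fst (hγ y)
     map_one_left y := congrArg Prod.snd (hγ y) }⟩

theorem homotopic_of_continuous_motion_planner (s : C(X × X, C(unitInterval, X)))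
    (hs : ∀ z, pathFibration X (s z) = z) : f₀.Homotopic f₁ :=
  homotopic_of_pathFibration_lift (s.comp (f₀.prodMk f₁)) fun y => hs (f₀ y, f₁ y)

end

/-- If a path-connected space `X` admits a continuous global motion planner, i.e. a continuous
map `s : X × X → P(X)` with `p ∘ s = id`, then `X` is contractible. -/
theorem contractible_of_continuous_motion_planner
    {X : Type*} [TopologicalSpace X] [PathConnectedSpace X]
    (s : C(X × X, C(unitInterval, X)))
    (hs : ∀ z : X × X, pathFibration X (s z) = z) :
    ContractibleSpace X := by
  obtain ⟨x₀⟩ := PathConnectedSpace.nonempty (X := X)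
  rw [contractible_iff_id_nullhomotopic]
  exact ⟨x₀, homotopic_of_continuous_motion_planner s hs⟩
end

section
/- Let I be a categorical invariant of a category C taking values in ℕ, and let X_•, Y_• : (ℝ, ≤) → C be functors. Then d_E(I(X_•), I(Y_•)) ≤ d_I(X_•, Y_•). -/
open CategoryTheory

open scoped ENNReal

/-- A categorical invariant of a category `C` taking values in `ℕ`: an assignment of natural
numbers to objects and morphisms such that `I (id X) = I X` and
`I (h ∘ g ∘ f) ≤ I g` for all composable morphisms. -/
structure CatInvariant (C : Type*) [Category C] where
  objVal : C → ℕ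
  morVal : ∀ {X Y : C}, (X ⟶ Y) → ℕ
  morVal_id : ∀ X : C, morVal (𝟙 X) = objVal X
  morVal_comp_le : ∀ {X Y Z W : C} (f : X ⟶ Y) (g : Y ⟶ Z) (h : Z ⟶ W),
    morVal (f ≫ g ≫ h) ≤ morVal g

/-- The persistent invariant associated to a functor `X : (ℝ, ≤) ⥤ C` and a categorical
invariant `I`: it assigns to each interval `[a, b]` the value of `I` on the structure
morphism `X a ⟶ X b`. -/
def persistentInvariant {C : Type*} [Category C] (I : CatInvariant C) (X : ℝ ⥤ C) :
    ∀ a b : ℝ, a ≤ b → ℕ :=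
  fun _ _ h => I.morVal (X.map (homOfLE h))

/-- Two interval-indexed invariants are `ε`-eroded if each dominates the other after
thickening intervals by `ε`. -/
def Eroded (F₁ F₂ : ∀ a b : ℝ, a ≤ b → ℕ) (ε : ℝ) : Prop :=
  0 ≤ ε ∧ ∀ (a b : ℝ) (hab : a ≤ b) (hab' : a - ε ≤ b + ε),
    F₂ (a - ε) (b + ε) hab' ≤ F₁ a b hab ∧ F₁ (a - ε) (b + ε) hab' ≤ F₂ a b hab

/-- The erosion distance: the infimum of all `ε ≥ 0` such that the two invariants are
`ε`-eroded (`∞` if none exists). -/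
noncomputable def erosionDist (F₁ F₂ : ∀ a b : ℝ, a ≤ b → ℕ) : ℝ≥0∞ :=
  sInf {e : ℝ≥0∞ | ∃ ε : ℝ, e = ENNReal.ofReal ε ∧ Eroded F₁ F₂ ε}

/-- A `δ`-interleaving between two functors `F G : (ℝ, ≤) ⥤ C`. -/
structure Interleaving {C : Type*} [Category C] (F G : ℝ ⥤ C) (δ : ℝ) where
  nonneg : 0 ≤ δ
  φ : ∀ t : ℝ, F.obj t ⟶ G.obj (t + δ)
  ψ : ∀ t : ℝ, G.obj t ⟶ F.obj (t + δ)
  nat_φ : ∀ (t s : ℝ) (h : t ≤ s),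
    F.map (homOfLE h) ≫ φ s = φ t ≫ G.map (homOfLE (by linarith : t + δ ≤ s + δ))
  nat_ψ : ∀ (t s : ℝ) (h : t ≤ s),
    G.map (homOfLE h) ≫ ψ s = ψ t ≫ F.map (homOfLE (by linarith : t + δ ≤ s + δ))
  tri_F : ∀ t : ℝ, φ t ≫ ψ (t + δ) = F.map (homOfLE (by linarith : t ≤ t + δ + δ))
  tri_G : ∀ t : ℝ, ψ t ≫ φ (t + δ) = G.map (homOfLE (by linarith : t ≤ t + δ + δ))

/-- The interleaving distance between two functors `F G : (ℝ, ≤) ⥤ C`. -/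
noncomputable def interleavingDist {C : Type*} [Category C] (F G : ℝ ⥤ C) : ℝ≥0∞ :=
  sInf {e : ℝ≥0∞ | ∃ δ : ℝ, e = ENNReal.ofReal δ ∧ Nonempty (Interleaving F G δ)}

lemma Eroded.erosionDist_le {F₁ F₂ : ∀ a b : ℝ, a ≤ b → ℕ} {ε : ℝ} (h : Eroded F₁ F₂ ε) :
    erosionDist F₁ F₂ ≤ ENNReal.ofReal ε :=
  sInf_le ⟨ε, rfl, h⟩

namespace Interleaving

variable {C : Type*} [Category C] {F G : ℝ ⥤ C} {δ : ℝ}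

/-- The `δ`-interleaving of `G` and `F` obtained by exchanging the two families of morphisms;
it reduces each two-sided statement about interleavings to one side. -/
def symm (i : Interleaving F G δ) : Interleaving G F δ where
  nonneg := i.nonneg
  φ := i.ψ
  ψ := i.φ
  nat_φ := i.nat_ψ
  nat_ψ := i.nat_φ
  tri_F := i.tri_G
  tri_G := i.tri_F

lemma ψ_comp_map_comp_φ (i : Interleaving F G δ) {a b : ℝ} (h : a + δ ≤ b) :
    i.ψ a ≫ F.map (homOfLE h) ≫ i.φ b =
      G.map (homOfLE (by linarith [i.nonneg] : a ≤ b + δ)) :=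
  calc
    _ = i.ψ a ≫ i.φ (a + δ) ≫ G.map (homOfLE (by gcongr : a + δ + δ ≤ b + δ)) := by
      rw [i.nat_φ]
    _ = G.map (homOfLE (by linarith [i.nonneg] : a ≤ a + δ + δ)) ≫ G.map (homOfLE _) := by
      rw [← Category.assoc, i.tri_G]
    _ = _ := (G.map_comp _ _).symm

-- The left endpoint is `a + δ` because `i.ψ (a - δ)` lands in `F.obj (a - δ + δ)`, which is not
-- definitionally `F.obj a`.
lemma persistentInvariant_le (i : Interleaving F G δ) (I : CatInvariant C) {a b : ℝ}
    (h : a + δ ≤ b) :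
    persistentInvariant I G a (b + δ) (by linarith [i.nonneg]) ≤
      persistentInvariant I F (a + δ) b h :=
  calc
    _ = I.morVal (i.ψ a ≫ F.map (homOfLE h) ≫ i.φ b) :=
      congrArg I.morVal (i.ψ_comp_map_comp_φ h).symm
    _ ≤ I.morVal (F.map (homOfLE h)) := I.morVal_comp_le _ _ _

lemma persistentInvariant_thicken_le (i : Interleaving F G δ) (I : CatInvariant C) {a b : ℝ}
    (h : a ≤ b) :
    persistentInvariant I G (a - δ) (b + δ) (by linarith [i.nonneg]) ≤
      persistentInvariant I F a b h := by
  simpa only [sub_add_cancel] using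
    i.persistentInvariant_le I (by rwa [sub_add_cancel] : a - δ + δ ≤ b)

lemma eroded_persistentInvariant (i : Interleaving F G δ) (I : CatInvariant C) :
    Eroded (persistentInvariant I F) (persistentInvariant I G) δ :=
  ⟨i.nonneg, fun _ _ h _ =>
    ⟨i.persistentInvariant_thicken_le I h, i.symm.persistentInvariant_thicken_le I h⟩⟩

end Interleaving

/-- Stability of persistent invariants: the erosion distance between the persistent
invariants is bounded above by the interleaving distance. -/
theorem erosionDist_persistentInvariant_le_interleavingDist
    {C : Type*} [Category C] (I : CatInvariant C) (X Y : ℝ ⥤ C) :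
    erosionDist (persistentInvariant I X) (persistentInvariant I Y) ≤
      interleavingDist X Y := by
  refine le_sInf ?_
  rintro _ ⟨δ, rfl, ⟨i⟩⟩
  exact (i.eroded_persistentInvariant I).erosionDist_le
end

section
/- Let p : E → B be a fibration with B path-connected and E contractible. Then secat(p) = cat(B). -/
open scoped ENNReal unitInterval

universe u v

/-- A continuous map `p : E → B` is a fibration if it has the homotopy lifting property with
respect to every topological space `Z`. -/
def IsFibration {E : Type u} {B : Type v} [TopologicalSpace E] [TopologicalSpace B]
    (p : C(E, B)) : Prop :=
  ∀ (Z : Type (max u v)) (_ : TopologicalSpace Z)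
    (H : C(Z × I, B)) (H₀ : C(Z, E)),
    (∀ z : Z, p (H₀ z) = H (z, 0)) →
      ∃ H' : C(Z × I, E),
        (∀ zt : Z × I, p (H' zt) = H zt) ∧ ∀ z : Z, H' (z, 0) = H₀ z

/-- The sectional category of a continuous map `p : E → B`: the least `n` (or `∞`) such that
`B` admits a cover by `n + 1` open sets, each carrying a continuous local section of `p`. -/
noncomputable def secat {E B : Type*} [TopologicalSpace E] [TopologicalSpace B]
    (p : C(E, B)) : ℕ∞ :=
  sInf {n : ℕ∞ | ∃ m : ℕ, n = (m : ℕ∞) ∧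
    ∃ U : Fin (m + 1) → Set B, (∀ i, IsOpen (U i)) ∧ (⋃ i, U i) = Set.univ ∧
      ∀ i, ∃ s : C(U i, E), ∀ x : U i, p (s x) = (x : B)}

/-- The Lyusternik–Schnirelmann category of a space `X`: the least `n` (or `∞`) such that `X`
admits a cover by `n + 1` open sets whose inclusions into `X` are null-homotopic. -/
noncomputable def LScat (X : Type*) [TopologicalSpace X] : ℕ∞ :=
  sInf {n : ℕ∞ | ∃ m : ℕ, n = (m : ℕ∞) ∧
    ∃ U : Fin (m + 1) → Set X, (∀ i, IsOpen (U i)) ∧ (⋃ i, U i) = Set.univ ∧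
      ∀ i, ∃ x : X,
        ContinuousMap.Homotopic
          (⟨Subtype.val, continuous_subtype_val⟩ : C(U i, X))
          (ContinuousMap.const (U i) x)}

/-!
A contraction of `E` makes `p` nullhomotopic, and composing this nullhomotopy with a local section
over `U` contracts `U` in `B`. Conversely, if `U` contracts in `B` to a point, that point can be
moved along a path into the image of `p`, where the constant map lifts to `E`. Lifting the
contraction run backwards, starting from this constant lift, ends at a section over `U`.
-/

section

variable {E : Type u} {B : Type v} [TopologicalSpace E] [TopologicalSpace B] {p : C(E, B)}

theorem IsFibration.exists_lift_of_homotopic (hp : IsFibration p) {X : Type v}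
    [TopologicalSpace X] {f : C(X, B)} (g : C(X, E)) (h : (p.comp g).Homotopic f) :
    ∃ s : C(X, E), p.comp s = f := by
  obtain ⟨F⟩ := h
  -- The lifting property tests spaces in `Type (max u v)` only, so `X` is lifted to that universe.
  let H : C(ULift.{u} X × I, B) := ⟨fun z ↦ F (z.2, z.1.down), by fun_prop⟩
  let H₀ : C(ULift.{u} X, E) := ⟨fun x ↦ g x.down, by fun_prop⟩
  obtain ⟨H', hH', -⟩ := hp (ULift.{u} X) inferInstance H H₀ fun x ↦ (F.apply_zero x.down).symm
  refine ⟨⟨fun x ↦ H' (ULift.up x, 1), by fun_prop⟩, ContinuousMap.ext fun x ↦ ?_⟩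
  exact (hH' (ULift.up x, 1)).trans (F.apply_one x)

theorem IsFibration.exists_lift_of_nullhomotopic [Nonempty E] [PathConnectedSpace B]
    (hp : IsFibration p) {X : Type v} [TopologicalSpace X] {f : C(X, B)}
    (hf : f.Nullhomotopic) : ∃ s : C(X, E), p.comp s = f := by
  obtain ⟨b, hfb⟩ := hf
  obtain ⟨e⟩ := ‹Nonempty E›
  have hconst : (ContinuousMap.const X (p e)).Homotopic (ContinuousMap.const X b) :=
    ⟨(PathConnectedSpace.somePath (p e) b).toHomotopyConst⟩
  exact hp.exists_lift_of_homotopic (ContinuousMap.const X e) (hconst.trans hfb.symm)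

theorem IsFibration.secat_le_LScat [Nonempty E] [PathConnectedSpace B] (hp : IsFibration p) :
    secat p ≤ LScat B := by
  refine sInf_le_sInf ?_
  rintro _ ⟨m, rfl, U, hUopen, hUcover, hUnull⟩
  refine ⟨m, rfl, U, hUopen, hUcover, fun i ↦ ?_⟩
  obtain ⟨s, hs⟩ := hp.exists_lift_of_nullhomotopic (hUnull i)
  exact ⟨s, DFunLike.congr_fun hs⟩

theorem LScat_le_secat_of_nullhomotopic (hp : p.Nullhomotopic) : LScat B ≤ secat p := by
  refine sInf_le_sInf ?_
  rintro _ ⟨m, rfl, U, hUopen, hUcover, hUsection⟩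
  refine ⟨m, rfl, U, hUopen, hUcover, fun i ↦ ?_⟩
  obtain ⟨s, hs⟩ := hUsection i
  have hincl : p.comp s = ⟨Subtype.val, continuous_subtype_val⟩ := ContinuousMap.ext hs
  exact hincl ▸ hp.comp_left s

theorem secat_eq_LScat_general [Nonempty E] [PathConnectedSpace B] (hp : IsFibration p)
    (hnull : p.Nullhomotopic) : secat p = LScat B :=
  le_antisymm hp.secat_le_LScat (LScat_le_secat_of_nullhomotopic hnull)

end

/-- For a fibration `p : E → B` with `E` contractible and `B` path-connected,
`secat p = cat B`. -/
theorem secat_eq_LScat {E : Type u} {B : Type v} [TopologicalSpace E] [TopologicalSpace B]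
    [ContractibleSpace E] [PathConnectedSpace B] (p : C(E, B)) (hp : IsFibration p) :
    secat p = LScat B :=
  secat_eq_LScat_general hp ((id_nullhomotopic E).comp_right p)
end

section
/- Let X and Y be path-connected topological spaces that are homotopy equivalent. Then TC(X) = TC(Y). -/
open scoped ENNReal

/-- The (reduced) topological complexity of a space `X`: the least `n` (or `∞`) such that
`X × X` admits a cover by `n + 1` open sets, each carrying a continuous motion planner,
i.e. a continuous map `s : Uᵢ → P(X)` with `(s z) 0 = z.1` and `(s z) 1 = z.2`. -/
noncomputable def topComplexity (X : Type*) [TopologicalSpace X] : ℕ∞ :=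
  sInf {n : ℕ∞ | ∃ m : ℕ, n = (m : ℕ∞) ∧
    ∃ U : Fin (m + 1) → Set (X × X), (∀ i, IsOpen (U i)) ∧ (⋃ i, U i) = Set.univ ∧
      ∀ i, ∃ s : C(U i, C(unitInterval, X)),
        ∀ z : U i, (s z) 0 = (z : X × X).1 ∧ (s z) 1 = (z : X × X).2}

/-!
By the exponential law, a motion planner on `U ⊆ X × X` is a homotopy between the two coordinate
projections `U → X`. If `f ∘ g` is homotopic to the identity of `Y`, then `g` can be cancelled up
to homotopy: `g ∘ u ≃ g ∘ v` implies `u ≃ f ∘ g ∘ u ≃ f ∘ g ∘ v ≃ v`. Applied to the projections on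
`(g × g)⁻¹(U)`, this transports motion planners, and hence covers, from `X` to `Y`.
-/

section MotionPlanner

variable {X Y Z : Type*} [TopologicalSpace X] [TopologicalSpace Y] [TopologicalSpace Z]

theorem homotopic_iff_exists_pathFamily (u v : C(Z, X)) :
    u.Homotopic v ↔ ∃ s : C(Z, C(unitInterval, X)), ∀ z, s z 0 = u z ∧ s z 1 = v z := by
  constructor
  · rintro ⟨H⟩
    exact ⟨(H.toContinuousMap.comp ContinuousMap.prodSwap).curry,
      fun z => ⟨H.apply_zero z, H.apply_one z⟩⟩
  · rintro ⟨s, hs⟩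
    exact ⟨{ toContinuousMap := s.uncurry.comp ContinuousMap.prodSwap
             map_zero_left := fun z => (hs z).1
             map_one_left := fun z => (hs z).2 }⟩

theorem homotopic_of_comp_left_homotopic {f : C(X, Y)} {g : C(Y, X)}
    (hfg : (f.comp g).Homotopic (ContinuousMap.id Y)) {u v : C(Z, Y)}
    (huv : (g.comp u).Homotopic (g.comp v)) : u.Homotopic v := by
  have cancel (w : C(Z, Y)) : (f.comp (g.comp w)).Homotopic w := hfg.comp (.refl w)
  have hmid : (f.comp (g.comp u)).Homotopic (f.comp (g.comp v)) :=
    (ContinuousMap.Homotopic.refl f).comp huv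
  exact ((cancel u).symm.trans hmid).trans (cancel v)

/-- The set `U ⊆ X × X` admits a continuous motion planner, that is, a continuous section over `U`
of the endpoint map `γ ↦ (γ 0, γ 1)`. It is spelled as in `topComplexity`, so that the
planners of a cover are instances of it definitionally. -/
def HasMotionPlanner (U : Set (X × X)) : Prop :=
  ∃ s : C(U, C(unitInterval, X)), ∀ z : U, (s z) 0 = (z : X × X).1 ∧ (s z) 1 = (z : X × X).2

theorem hasMotionPlanner_iff_homotopic {U : Set (X × X)} :
    HasMotionPlanner U ↔
      (ContinuousMap.fst.restrict U).Homotopic (ContinuousMap.snd.restrict U) :=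
  (homotopic_iff_exists_pathFamily (ContinuousMap.fst.restrict U)
    (ContinuousMap.snd.restrict U)).symm

theorem HasMotionPlanner.preimage_prodMap {f : C(X, Y)} {g : C(Y, X)}
    (hfg : (f.comp g).Homotopic (ContinuousMap.id Y)) {U : Set (X × X)}
    (hU : HasMotionPlanner U) : HasMotionPlanner (g.prodMap g ⁻¹' U) := by
  rw [hasMotionPlanner_iff_homotopic] at hU ⊢
  have hproj : (g.comp (ContinuousMap.fst.restrict (g.prodMap g ⁻¹' U))).Homotopic
      (g.comp (ContinuousMap.snd.restrict (g.prodMap g ⁻¹' U))) :=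
    hU.comp (.refl ((g.prodMap g).restrictPreimage U))
  exact homotopic_of_comp_left_homotopic hfg hproj

theorem topComplexity_le_of_comp_homotopic_id {f : C(X, Y)} {g : C(Y, X)}
    (hfg : (f.comp g).Homotopic (ContinuousMap.id Y)) :
    topComplexity Y ≤ topComplexity X := by
  refine sInf_le_sInf ?_
  rintro _ ⟨m, rfl, U, hopen, hcover, hplan⟩
  refine ⟨m, rfl, fun i => g.prodMap g ⁻¹' U i,
    fun i => (hopen i).preimage (g.prodMap g).continuous, ?_,
    fun i => HasMotionPlanner.preimage_prodMap hfg (hplan i)⟩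
  rw [← Set.preimage_iUnion, hcover, Set.preimage_univ]

end MotionPlanner

/-- Topological complexity is a homotopy invariant: homotopy equivalent path-connected
spaces have equal topological complexity. -/
theorem topComplexity_eq_of_homotopyEquiv {X Y : Type*} [TopologicalSpace X]
    [TopologicalSpace Y] [PathConnectedSpace X] [PathConnectedSpace Y]
    (h : ContinuousMap.HomotopyEquiv X Y) :
    topComplexity X = topComplexity Y :=
  le_antisymm (topComplexity_le_of_comp_homotopic_id h.left_inv)
    (topComplexity_le_of_comp_homotopic_id h.right_inv)
end

section
/- Let X be a paracompact path-connected topological space. Then cat(X) ≤ TC(X) ≤ cat(X × X). -/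
open scoped ENNReal

/-!
A continuous family of paths from `f z` to `g z` is, by currying, a homotopy from `f` to `g`. Hence
`TC X` is governed by the open sets of `X × X` on which the two projections to `X` are homotopic.
Slicing such a set by `X × {x₀}` turns that homotopy into a contraction in `X`, which gives
`cat X ≤ TC X`. Conversely, over a set that contracts in `X × X` both projections are
null-homotopic, hence homotopic to each other when `X` is path-connected.
-/

/-- The reduced covering number of the property `P`: the least `n` (or `∞`) such that the space is
covered by `n + 1` open sets satisfying `P`. Both `LScat` and `topComplexity` are of this form. As
in those definitions, exactly `n + 1` sets are required, and repetitions are allowed. -/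
noncomputable def openCoverNumber {Y : Type*} [TopologicalSpace Y] (P : Set Y → Prop) : ℕ∞ :=
  sInf {n : ℕ∞ | ∃ m : ℕ, n = (m : ℕ∞) ∧
    ∃ U : Fin (m + 1) → Set Y, (∀ i, IsOpen (U i)) ∧ (⋃ i, U i) = Set.univ ∧ ∀ i, P (U i)}

section

open ContinuousMap

variable {X Y Z : Type*} [TopologicalSpace X] [TopologicalSpace Y] [TopologicalSpace Z]

theorem openCoverNumber_le_of_preimage {P : Set Y → Prop} {Q : Set Z → Prop} {f : Y → Z}
    (hf : Continuous f) (hQP : ∀ U, Q U → P (f ⁻¹' U)) :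
    openCoverNumber P ≤ openCoverNumber Q := by
  refine sInf_le_sInf ?_
  rintro n ⟨m, rfl, U, hU_open, hU_cover, hU⟩
  refine ⟨m, rfl, fun i => f ⁻¹' U i, fun i => (hU_open i).preimage hf, ?_,
    fun i => hQP _ (hU i)⟩
  rw [← Set.preimage_iUnion, hU_cover, Set.preimage_univ]

theorem openCoverNumber_anti {P Q : Set Y → Prop} (hQP : ∀ U, Q U → P U) :
    openCoverNumber P ≤ openCoverNumber Q :=
  openCoverNumber_le_of_preimage continuous_id hQP

theorem homotopic_iff_exists_pathFamily_s7 {f g : C(Y, X)} :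
    f.Homotopic g ↔ ∃ s : C(Y, C(unitInterval, X)), ∀ y, s y 0 = f y ∧ s y 1 = g y := by
  constructor
  · rintro ⟨H⟩
    exact ⟨(H.toContinuousMap.comp prodSwap).curry, fun y => ⟨H.apply_zero y, H.apply_one y⟩⟩
  · rintro ⟨s, hs⟩
    exact ⟨⟨s.uncurry.comp prodSwap, fun y => (hs y).1, fun y => (hs y).2⟩⟩

theorem homotopic_of_nullhomotopic [PathConnectedSpace X] {f g : C(Y, X)}
    (hf : f.Nullhomotopic) (hg : g.Nullhomotopic) : f.Homotopic g := by
  obtain ⟨a, hfa⟩ := hf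
  obtain ⟨b, hgb⟩ := hg
  have hab : (const Y a).Homotopic (const Y b) :=
    ⟨(PathConnectedSpace.somePath a b).toHomotopyConst⟩
  exact (hfa.trans hab).trans hgb.symm

end

section

open ContinuousMap

variable (X : Type*) [TopologicalSpace X]

theorem LScat_eq_openCoverNumber :
    LScat X = openCoverNumber fun U : Set X => ((ContinuousMap.id X).restrict U).Nullhomotopic :=
  rfl

theorem topComplexity_eq_openCoverNumber :
    topComplexity X = openCoverNumber fun U : Set (X × X) =>
      ((fst : C(X × X, X)).restrict U).Homotopic ((snd : C(X × X, X)).restrict U) := by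
  simp only [homotopic_iff_exists_pathFamily_s7]
  rfl

theorem LScat_le_topComplexity [Nonempty X] : LScat X ≤ topComplexity X := by
  obtain ⟨x₀⟩ := ‹Nonempty X›
  let slice : C(X, X × X) := (ContinuousMap.id X).prodMk (const X x₀)
  rw [LScat_eq_openCoverNumber, topComplexity_eq_openCoverNumber]
  refine openCoverNumber_le_of_preimage slice.continuous fun U hU => ⟨x₀, ?_⟩
  -- `fst ∘ slice` is the identity and `snd ∘ slice` is constant, both definitionally.
  exact hU.comp (.refl (slice.restrictPreimage U))

theorem topComplexity_le_LScat_prod [PathConnectedSpace X] :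
    topComplexity X ≤ LScat (X × X) := by
  rw [LScat_eq_openCoverNumber, topComplexity_eq_openCoverNumber]
  exact openCoverNumber_anti fun U hU =>
    homotopic_of_nullhomotopic (hU.comp_right fst) (hU.comp_right snd)

end

theorem LScat_le_topComplexity_le_LScat_prod_general
    {X : Type*} [TopologicalSpace X] [PathConnectedSpace X] :
    LScat X ≤ topComplexity X ∧ topComplexity X ≤ LScat (X × X) :=
  ⟨LScat_le_topComplexity X, topComplexity_le_LScat_prod X⟩

/-- For a paracompact path-connected space `X`, `cat X ≤ TC X ≤ cat (X × X)`. -/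
theorem LScat_le_topComplexity_le_LScat_prod
    {X : Type*} [TopologicalSpace X] [ParacompactSpace X] [PathConnectedSpace X] :
    LScat X ≤ topComplexity X ∧ topComplexity X ≤ LScat (X × X) :=
  LScat_le_topComplexity_le_LScat_prod_general
end

section
/- Let f : X → Y be a continuous map between path-connected topological spaces. (a) If g : W → X is a continuous map from a path-connected space W admitting a right homotopy inverse (a continuous h : X → W with g ∘ h homotopic to id_X), then TC(f ∘ g) = TC(f). (b) If g : Y → Z is a continuous map to a path-connected space Z admitting a left homotopy inverse (a continuous h : Z → Y with h ∘ g homotopic to id_Y), then TC(g ∘ f) = TC(f). -/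
open scoped ENNReal

universe u v w

/-- Scott's pullback topological complexity of a continuous map `f : X → Y`: the least `n`
(or `∞`) such that `X × X` admits a cover by `n + 1` open sets, each carrying a continuous
map `s : Uᵢ → P(Y)` with `(s z) 0 = f z.1` and `(s z) 1 = f z.2`. -/
noncomputable def topComplexityMap {X Y : Type*} [TopologicalSpace X] [TopologicalSpace Y]
    (f : C(X, Y)) : ℕ∞ :=
  sInf {n : ℕ∞ | ∃ m : ℕ, n = (m : ℕ∞) ∧
    ∃ U : Fin (m + 1) → Set (X × X), (∀ i, IsOpen (U i)) ∧ (⋃ i, U i) = Set.univ ∧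
      ∀ i, ∃ s : C(U i, C(unitInterval, Y)),
        ∀ z : U i, (s z) 0 = f (z : X × X).1 ∧ (s z) 1 = f (z : X × X).2}

/-!
A continuous family of paths from `f x` to `f x'` over `U ⊆ X × X` is a homotopy between the two
maps `f ∘ pr₁` and `f ∘ pr₂` restricted to `U`. In this form motion planners for `f` visibly push
forward along maps out of `Y`, pull back along maps into `X`, and transport along homotopies of
`f`. Hence `TC(f ∘ g) ≤ TC(f)`, `TC(g ∘ f) ≤ TC(f)`, and `TC` is a homotopy invariant. The reverse
inequalities come from `f ≃ (f ∘ g) ∘ h` in (a) and `f ≃ h ∘ (g ∘ f)` in (b).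
-/

section MotionPlanner

variable {W X Y Z : Type*} [TopologicalSpace W] [TopologicalSpace X] [TopologicalSpace Y]
  [TopologicalSpace Z]

theorem exists_continuousMap_path_iff_homotopic (f₀ f₁ : C(X, Y)) :
    (∃ s : C(X, C(unitInterval, Y)), ∀ x, s x 0 = f₀ x ∧ s x 1 = f₁ x) ↔ f₀.Homotopic f₁ := by
  constructor
  · rintro ⟨s, hs⟩
    exact ⟨{ toContinuousMap := s.uncurry.comp ContinuousMap.prodSwap
             map_zero_left := fun x => (hs x).1
             map_one_left := fun x => (hs x).2 }⟩
  · rintro ⟨H⟩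
    exact ⟨(H.toContinuousMap.comp ContinuousMap.prodSwap).curry,
      fun x => ⟨H.map_zero_left x, H.map_one_left x⟩⟩

/-- `f` has a motion planner on `U ⊆ X × X` if paths in `Y` from `f x` to `f x'` can be chosen
continuously in `(x, x') ∈ U`; `topComplexityMap f` counts the open sets of this kind needed to
cover `X × X`. -/
def HasMotionPlannerOn (f : C(X, Y)) (U : Set (X × X)) : Prop :=
  ∃ s : C(U, C(unitInterval, Y)),
    ∀ z : U, s z 0 = f (z : X × X).1 ∧ s z 1 = f (z : X × X).2

theorem hasMotionPlannerOn_iff_homotopic {f : C(X, Y)} {U : Set (X × X)} :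
    HasMotionPlannerOn f U ↔
      (f.comp (ContinuousMap.fst.restrict U)).Homotopic
        (f.comp (ContinuousMap.snd.restrict U)) :=
  exists_continuousMap_path_iff_homotopic (f.comp (ContinuousMap.fst.restrict U))
    (f.comp (ContinuousMap.snd.restrict U))

namespace HasMotionPlannerOn

variable {f f' : C(X, Y)} {U : Set (X × X)}

theorem postcomp (hU : HasMotionPlannerOn f U) (g : C(Y, Z)) :
    HasMotionPlannerOn (g.comp f) U :=
  hasMotionPlannerOn_iff_homotopic.2
    ((ContinuousMap.Homotopic.refl g).comp (hasMotionPlannerOn_iff_homotopic.1 hU))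

theorem precomp (hU : HasMotionPlannerOn f U) (g : C(W, X)) :
    HasMotionPlannerOn (f.comp g) (Prod.map g g ⁻¹' U) :=
  hasMotionPlannerOn_iff_homotopic.2 <|
    (hasMotionPlannerOn_iff_homotopic.1 hU).comp (.refl ((g.prodMap g).restrictPreimage U))

theorem of_homotopic (hU : HasMotionPlannerOn f U) (hf : f.Homotopic f') :
    HasMotionPlannerOn f' U := by
  rw [hasMotionPlannerOn_iff_homotopic] at hU ⊢
  exact (hf.symm.comp (.refl _)).trans (hU.trans (hf.comp (.refl _)))

end HasMotionPlannerOn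

theorem topComplexityMap_le_of_preimage {f : C(X, Y)} {f' : C(W, Z)} (k : C(X, W))
    (hk : ∀ U, HasMotionPlannerOn f' U → HasMotionPlannerOn f (Prod.map k k ⁻¹' U)) :
    topComplexityMap f ≤ topComplexityMap f' := by
  refine sInf_le_sInf ?_
  rintro n ⟨m, rfl, U, hopen, hcover, hplan⟩
  refine ⟨m, rfl, fun i => Prod.map k k ⁻¹' U i,
    fun i => (hopen i).preimage (k.continuous.prodMap k.continuous), ?_,
    fun i => hk (U i) (hplan i)⟩
  rw [← Set.preimage_iUnion, hcover, Set.preimage_univ]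

theorem topComplexityMap_precomp_le (f : C(X, Y)) (g : C(W, X)) :
    topComplexityMap (f.comp g) ≤ topComplexityMap f :=
  topComplexityMap_le_of_preimage g fun _ hU => hU.precomp g

theorem topComplexityMap_postcomp_le (g : C(Y, Z)) (f : C(X, Y)) :
    topComplexityMap (g.comp f) ≤ topComplexityMap f :=
  topComplexityMap_le_of_preimage (.id X) fun _ hU => hU.postcomp g

theorem topComplexityMap_eq_of_homotopic {f f' : C(X, Y)} (hf : f.Homotopic f') :
    topComplexityMap f = topComplexityMap f' :=
  le_antisymm (topComplexityMap_le_of_preimage (.id X) fun _ hU => hU.of_homotopic hf.symm)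
    (topComplexityMap_le_of_preimage (.id X) fun _ hU => hU.of_homotopic hf)

end MotionPlanner

theorem topComplexityMap_comp_right_left_homotopy_inverse_general
    {X : Type u} {Y : Type v} [TopologicalSpace X] [TopologicalSpace Y] (f : C(X, Y)) :
    (∀ (W : Type w) (_ : TopologicalSpace W) (g : C(W, X)) (h : C(X, W)),
      (g.comp h).Homotopic (ContinuousMap.id X) →
        topComplexityMap (f.comp g) = topComplexityMap f) ∧
    (∀ (Z : Type w) (_ : TopologicalSpace Z) (g : C(Y, Z)) (h : C(Z, Y)),
      (h.comp g).Homotopic (ContinuousMap.id Y) →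
        topComplexityMap (g.comp f) = topComplexityMap f) := by
  refine ⟨fun W _ g h hgh => le_antisymm (topComplexityMap_precomp_le f g) ?_,
    fun Z _ g h hhg => le_antisymm (topComplexityMap_postcomp_le g f) ?_⟩
  · calc topComplexityMap f = topComplexityMap ((f.comp g).comp h) :=
          topComplexityMap_eq_of_homotopic ((ContinuousMap.Homotopic.refl f).comp hgh.symm)
      _ ≤ topComplexityMap (f.comp g) := topComplexityMap_precomp_le (f.comp g) h
  · calc topComplexityMap f = topComplexityMap (h.comp (g.comp f)) :=
          topComplexityMap_eq_of_homotopic (hhg.symm.comp (.refl f))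
      _ ≤ topComplexityMap (g.comp f) := topComplexityMap_postcomp_le h (g.comp f)

/-- (a) Precomposition with a map admitting a right homotopy inverse preserves `TC`;
(b) postcomposition with a map admitting a left homotopy inverse preserves `TC`. -/
theorem topComplexityMap_comp_right_left_homotopy_inverse
    {X : Type u} {Y : Type v} [TopologicalSpace X] [TopologicalSpace Y]
    [PathConnectedSpace X] [PathConnectedSpace Y] (f : C(X, Y)) :
    (∀ (W : Type w) (_ : TopologicalSpace W) (_ : PathConnectedSpace W)
      (g : C(W, X)) (h : C(X, W)), (g.comp h).Homotopic (ContinuousMap.id X) →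
        topComplexityMap (f.comp g) = topComplexityMap f) ∧
    (∀ (Z : Type w) (_ : TopologicalSpace Z) (_ : PathConnectedSpace Z)
      (g : C(Y, Z)) (h : C(Z, Y)), (h.comp g).Homotopic (ContinuousMap.id Y) →
        topComplexityMap (g.comp f) = topComplexityMap f) :=
  ⟨fun W _ _ => (topComplexityMap_comp_right_left_homotopy_inverse_general f).1 W _,
    fun Z _ _ => (topComplexityMap_comp_right_left_homotopy_inverse_general f).2 Z _⟩
end
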